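/- There exists a constant c > 0 such that the following holds. For every Δ ≥ 2, every d ≥ 1, and every temporal graph 𝒢 of lifetime τ ≥ dΔ with Δ-vertex cover number ν, there exists a family ℳ of Δ-temporal matchings of 𝒢[Δ(d−1)+1, Δd] that is d-complete for 𝒢 and satisfies |ℳ| ≤ Δ^{c·ν}. -/

import Mathlib

/-- A temporal graph on vertex set `V`: a lifetime `tau` and edge sets `E t`
(undirected edges, modeled as `Sym2 V`) for each time step. Only times
`1 ≤ t ≤ tau` give rise to time edges. -/
structure TemporalGraph (V : Type*) where
  tau : ℕ
  E : ℕ → Finset (Sym2 V)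

variable {V : Type*}

/-- `(e, t)` is a time edge of `G`. -/
def IsTimeEdge (G : TemporalGraph V) (et : Sym2 V × ℕ) : Prop :=
  et.1 ∈ G.E et.2 ∧ 1 ≤ et.2 ∧ et.2 ≤ G.tau

/-- Two (undirected) edges share an endpoint. -/
def ShareEndpoint (e f : Sym2 V) : Prop := ∃ v, v ∈ e ∧ v ∈ f

/-- Two time edges are `Δ`-independent: the edges share no endpoint,
or the time labels are at least `Δ` apart. -/
def DeltaIndep (Δ : ℕ) (x y : Sym2 V × ℕ) : Prop :=
  ¬ ShareEndpoint x.1 y.1 ∨ (Δ : ℤ) ≤ |(x.2 : ℤ) - (y.2 : ℤ)|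

/-- A `Δ`-temporal matching of `G`: a set of time edges of `G` that are
pairwise `Δ`-independent. -/
def IsTemporalMatching (G : TemporalGraph V) (Δ : ℕ) (M : Finset (Sym2 V × ℕ)) : Prop :=
  (∀ et ∈ M, IsTimeEdge G et) ∧ ∀ x ∈ M, ∀ y ∈ M, x ≠ y → DeltaIndep Δ x y

/-- `M[a,b]`: the time edges of `M` with time label between `a` and `b`. -/
def restrict (M : Finset (Sym2 V × ℕ)) (a b : ℕ) : Finset (Sym2 V × ℕ) :=
  M.filter (fun et => a ≤ et.2 ∧ et.2 ≤ b)

/-- `G[a,b]`: the temporal graph on `V` whose time edges are exactly those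
time edges of `G` with time label between `a` and `b`. -/
def tgSlice (G : TemporalGraph V) (a b : ℕ) : TemporalGraph V :=
  { tau := G.tau, E := fun t => if a ≤ t ∧ t ≤ b then G.E t else ∅ }

/-- `ν` suffices as a `Δ`-vertex cover bound for `G`: every `Δ` consecutive
layers can be covered by at most `ν` vertices. -/
def IsDeltaVC (G : TemporalGraph V) (Δ ν : ℕ) : Prop :=
  ∀ i, 1 ≤ i → i ≤ G.tau - Δ + 1 →
    ∃ S : Finset V, S.card ≤ ν ∧
      ∀ t ∈ Finset.Icc i (i + Δ - 1), ∀ e ∈ G.E t, ∃ v ∈ S, v ∈ e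

/-- `ν` is the `Δ`-vertex cover number of `G` (the minimum such bound). -/
def IsDeltaVCNum (G : TemporalGraph V) (Δ ν : ℕ) : Prop :=
  IsDeltaVC G Δ ν ∧ ∀ μ, IsDeltaVC G Δ μ → ν ≤ μ

/-- The maximum size of a `Δ`-temporal matching of `G`. -/
noncomputable def maxMatchingSize (G : TemporalGraph V) (Δ : ℕ) : ℕ :=
  sSup { k | ∃ M : Finset (Sym2 V × ℕ), IsTemporalMatching G Δ M ∧ M.card = k }

/-- A family `ℳ` of sets of time edges is `d`-complete for `G` (w.r.t. `Δ`):
for every `Δ`-temporal matching `M` of `G` there is `M' ∈ ℳ` such that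
`(M \ M[Δ(d-1)+1, Δd]) ∪ M'` is a `Δ`-temporal matching of `G` of size at
least `|M|`. -/
def DComplete {V : Type*} [DecidableEq V] (G : TemporalGraph V) (Δ d : ℕ)
    (ℳ : Finset (Finset (Sym2 V × ℕ))) : Prop :=
  ∀ M : Finset (Sym2 V × ℕ), IsTemporalMatching G Δ M →
    ∃ M' ∈ ℳ,
      IsTemporalMatching G Δ ((M \ restrict M (Δ * (d - 1) + 1) (Δ * d)) ∪ M') ∧
      M.card ≤ ((M \ restrict M (Δ * (d - 1) + 1) (Δ * d)) ∪ M').card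

/-!
Let `N` be the part of a `Δ`-temporal matching `M` inside a window of at most `Δ` layers. Since
`Δ` consecutive layers have a cover of size `ν`, a matching inside `Δ` consecutive layers has at
most `ν` time edges. So `N` occupies at most `2ν` pairs (vertex, time), and the at most `2ν` time
edges of `M` outside the window but at distance less than `Δ` from it block at most `4νΔ` such pairs
in the window. The part `N` may be exchanged for a matching `X` of the window exactly when `X`
avoids the blocked pairs. It therefore suffices to keep a family of matchings of the window which
represents all of them, with the cardinality as weight, against blocking sets of size `4νΔ`.

In a minimal representing family every member has a blocking set which it avoids but which meets
all other members of at least the same weight. Tuza's inequality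
`∑ x ^ #(A i) * y ^ #(B i) ≤ 1` for such set pairs, applied with `x = 1 / (2Δ)` and `y = 1 - x`,
bounds the size of the family by `(2Δ) ^ (2ν) * 2 ^ (4ν) ≤ Δ ^ (8ν)`.
-/

section SetPairs

open Finset

variable {α ι ω R : Type*} [CommSemiring R]

theorem sum_Icc_sdiff_pow_mul_pow [DecidableEq α] {x y : R} (hxy : x + y = 1) {A B U : Finset α}
    (hA : A ⊆ U) (hB : B ⊆ U) (hAB : Disjoint A B) :
    ∑ W ∈ Icc A (U \ B), x ^ #W * y ^ #(U \ W) = x ^ #A * y ^ #B := by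
  have hAU : A ⊆ U \ B := subset_sdiff.2 ⟨hA, hAB⟩
  have union_injOn : Set.InjOn (A ∪ ·) ((U \ B) \ A).powerset := by
    intro S hS T hT hST
    have hS := (subset_sdiff.1 (mem_powerset.1 hS)).2
    have hT := (subset_sdiff.1 (mem_powerset.1 hT)).2
    rw [← union_sdiff_cancel_left hS.symm, ← union_sdiff_cancel_left hT.symm]
    exact congrArg (· \ A) hST
  rw [Icc_eq_image_powerset hAU, sum_image union_injOn]
  calc ∑ S ∈ ((U \ B) \ A).powerset, x ^ #(A ∪ S) * y ^ #(U \ (A ∪ S))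
      = ∑ S ∈ ((U \ B) \ A).powerset,
          x ^ #A * y ^ #B * (x ^ #S * y ^ (#((U \ B) \ A) - #S)) := by
        refine sum_congr rfl fun S hS => ?_
        have hSU := mem_powerset.1 hS
        have hAS : Disjoint A S := (subset_sdiff.1 hSU).2.symm
        have hcompl : U \ (A ∪ S) = B ∪ (((U \ B) \ A) \ S) := by grind
        have hdisj : Disjoint B (((U \ B) \ A) \ S) :=
          disjoint_sdiff.mono_right (sdiff_subset.trans sdiff_subset)
        rw [hcompl, card_union_of_disjoint hAS, card_union_of_disjoint hdisj,
          card_sdiff_of_subset hSU]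
        ring
    _ = x ^ #A * y ^ #B := by
        rw [← mul_sum, sum_pow_mul_eq_add_pow, hxy, one_pow, mul_one]

variable [PartialOrder R] [IsOrderedRing R]

/-- Tuza's inequality. If every element of `U` is put into a set `W` independently with probability
`x`, the summands are the probabilities of the events `A i ⊆ W ⊆ U \ B i`, which are pairwise
disjoint. -/
theorem sum_pow_mul_pow_le_one {x y : R} (hx : 0 ≤ x) (hy : 0 ≤ y) (hxy : x + y = 1)
    {s : Finset ι} {A B : ι → Finset α} (hAB : ∀ i ∈ s, Disjoint (A i) (B i))
    (hcross : (s : Set ι).Pairwise fun i j => ¬ Disjoint (A i) (B j) ∨ ¬ Disjoint (A j) (B i)) :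
    ∑ i ∈ s, x ^ #(A i) * y ^ #(B i) ≤ 1 := by
  classical
  let U : Finset α := s.biUnion fun i => A i ∪ B i
  have hAU : ∀ i ∈ s, A i ⊆ U := fun i hi =>
    subset_union_left.trans (subset_biUnion_of_mem (fun i => A i ∪ B i) hi)
  have hBU : ∀ i ∈ s, B i ⊆ U := fun i hi =>
    subset_union_right.trans (subset_biUnion_of_mem (fun i => A i ∪ B i) hi)
  have hdisj : (s : Set ι).PairwiseDisjoint fun i => Icc (A i) (U \ B i) := by
    intro i hi j hj hij
    refine disjoint_left.2 fun W hWi hWj => ?_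
    rw [mem_Icc, subset_sdiff] at hWi hWj
    exact (hcross hi hj hij).elim (· (hWj.2.2.mono_left hWi.1)) (· (hWi.2.2.mono_left hWj.1))
  have hsub : s.biUnion (fun i => Icc (A i) (U \ B i)) ⊆ U.powerset :=
    biUnion_subset.2 fun i _ W hW => mem_powerset.2 ((mem_Icc.1 hW).2.trans sdiff_subset)
  calc ∑ i ∈ s, x ^ #(A i) * y ^ #(B i)
      = ∑ i ∈ s, ∑ W ∈ Icc (A i) (U \ B i), x ^ #W * y ^ #(U \ W) :=
        sum_congr rfl fun i hi =>
          (sum_Icc_sdiff_pow_mul_pow hxy (hAU i hi) (hBU i hi) (hAB i hi)).symm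
    _ = ∑ W ∈ s.biUnion fun i => Icc (A i) (U \ B i), x ^ #W * y ^ #(U \ W) :=
        (sum_biUnion hdisj).symm
    _ ≤ ∑ W ∈ U.powerset, x ^ #W * y ^ #(U \ W) :=
        sum_le_sum_of_subset_of_nonneg hsub fun W _ _ => by positivity
    _ = ∑ W ∈ U.powerset, x ^ #W * y ^ (#U - #W) :=
        sum_congr rfl fun W hW => by rw [card_sdiff_of_subset (mem_powerset.1 hW)]
    _ = 1 := by rw [sum_pow_mul_eq_add_pow, hxy, one_pow]

/-- `F'` is a max `q`-representative family for `F`, where the index `i` stands for the set `A i` of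
weight `w i`: whenever a member of `F` avoids a set `B` of size at most `q`, so does a member of
`F'` of at least the same weight. The inclusion `F' ⊆ F` is not part of the definition. -/
def IsMaxRepresentative [LE ω] (q : ℕ) (A : ι → Finset α) (w : ι → ω) (F' F : Finset ι) : Prop :=
  ∀ B : Finset α, #B ≤ q → ∀ i ∈ F, Disjoint (A i) B → ∃ j ∈ F', w i ≤ w j ∧ Disjoint (A j) B

theorem exists_separating_of_minimal [Preorder ω] {q : ℕ} {A : ι → Finset α} {w : ι → ω}
    {F F' : Finset ι} (hF' : Minimal (IsMaxRepresentative q A w · F) F') {i : ι} (hi : i ∈ F') :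
    ∃ B : Finset α, #B ≤ q ∧ Disjoint (A i) B ∧
      ∀ j ∈ F', j ≠ i → w i ≤ w j → ¬ Disjoint (A j) B := by
  classical
  have hnot : ¬ IsMaxRepresentative q A w (F'.erase i) F :=
    hF'.not_prop_of_lt (erase_ssubset hi)
  simp only [IsMaxRepresentative, mem_erase, not_forall] at hnot
  obtain ⟨B, hBq, k, hk, hkB, hnone⟩ := hnot
  have havoid : ∀ j ∈ F', w k ≤ w j → Disjoint (A j) B → j = i := fun j hj hkj hjB =>
    by_contra fun hji => hnone ⟨j, ⟨hji, hj⟩, hkj, hjB⟩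
  obtain ⟨j, hj, hkj, hjB⟩ := hF'.prop B hBq k hk hkB
  obtain rfl := havoid j hj hkj hjB
  exact ⟨B, hBq, hjB, fun l hl hlj hjl hlB => hlj (havoid l hl (hkj.trans hjl) hlB)⟩

theorem exists_isMaxRepresentative [LinearOrder ω] {x y : R} (hx : 0 ≤ x) (hy : 0 ≤ y)
    (hxy : x + y = 1) {p : ℕ} (q : ℕ) {A : ι → Finset α} (w : ι → ω) {F : Finset ι}
    (hA : ∀ i ∈ F, #(A i) ≤ p) :
    ∃ F' ⊆ F, IsMaxRepresentative q A w F' F ∧ (#F' : R) * (x ^ p * y ^ q) ≤ 1 := by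
  obtain ⟨F', hF'F, hmin⟩ := exists_minimal_le_of_wellFoundedLT (IsMaxRepresentative q A w · F) F
    fun _ _ i hi hiB => ⟨i, hi, le_rfl, hiB⟩
  refine ⟨F', hF'F, hmin.prop, ?_⟩
  choose! B hBq hAB hsep using fun i => exists_separating_of_minimal hmin (i := i)
  have hx1 : x ≤ 1 := hxy ▸ le_add_of_nonneg_right hy
  have hy1 : y ≤ 1 := hxy ▸ le_add_of_nonneg_left hx
  calc (#F' : R) * (x ^ p * y ^ q) = ∑ _i ∈ F', x ^ p * y ^ q := by rw [sum_const, nsmul_eq_mul]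
    _ ≤ ∑ i ∈ F', x ^ #(A i) * y ^ #(B i) :=
        sum_le_sum fun i hi => mul_le_mul (pow_le_pow_of_le_one hx hx1 (hA i (hF'F hi)))
          (pow_le_pow_of_le_one hy hy1 (hBq i hi)) (by positivity) (by positivity)
    _ ≤ 1 := sum_pow_mul_pow_le_one hx hy hxy hAB fun i hi j hj hij =>
        (le_total (w i) (w j)).symm.imp (hsep j hj i hi hij) (hsep i hi j hj hij.symm)

end SetPairs

theorem one_half_le_one_sub_pow {n : ℕ} (hn : n ≠ 0) :
    (1 / 2 : ℝ) ≤ (1 - 1 / (2 * n)) ^ n := by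
  have hpos : (0 : ℝ) < n := by positivity
  have hle : (1 : ℝ) / (2 * n) ≤ 1 := by
    rw [div_le_one (by positivity)]
    have : (1 : ℝ) ≤ n := by exact_mod_cast Nat.one_le_iff_ne_zero.2 hn
    linarith
  calc (1 / 2 : ℝ) = 1 + n * (-(1 / (2 * n))) := by field_simp; norm_num
    _ ≤ (1 + -(1 / (2 * n))) ^ n := one_add_mul_le_pow (by linarith) n
    _ = (1 - 1 / (2 * n)) ^ n := by rw [← sub_eq_add_neg]

theorem inv_pow_le_pow_mul_one_sub_pow {n : ℕ} (hn : 2 ≤ n) (k : ℕ) :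
    ((n : ℝ) ^ (8 * k))⁻¹ ≤ (1 / (2 * n)) ^ (2 * k) * (1 - 1 / (2 * n)) ^ (4 * k * n) := by
  have hn2 : (2 : ℝ) ≤ n := by exact_mod_cast hn
  calc ((n : ℝ) ^ (8 * k))⁻¹ = (1 / (n * n)) ^ (2 * k) * (1 / n) ^ (4 * k) := by
        rw [← sq, one_div_pow, one_div_pow, ← pow_mul, one_div_mul_one_div, ← pow_add, one_div]
        ring_nf
    _ ≤ (1 / (2 * n)) ^ (2 * k) * (1 / 2) ^ (4 * k) := by gcongr
    _ ≤ (1 / (2 * n)) ^ (2 * k) * ((1 - 1 / (2 * n)) ^ n) ^ (4 * k) := by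
        gcongr
        exact one_half_le_one_sub_pow (by omega)
    _ = (1 / (2 * n)) ^ (2 * k) * (1 - 1 / (2 * n)) ^ (4 * k * n) := by
        rw [← pow_mul, mul_comm n]

section Matchings

variable {G : TemporalGraph V} {Δ a b ν : ℕ} {M N : Finset (Sym2 V × ℕ)} {x y : Sym2 V × ℕ}

theorem not_deltaIndep_iff :
    ¬ DeltaIndep Δ x y ↔ ShareEndpoint x.1 y.1 ∧ |(x.2 : ℤ) - y.2| < Δ := by
  rw [DeltaIndep, not_or, not_not, not_le]

theorem DeltaIndep.symm (h : DeltaIndep Δ x y) : DeltaIndep Δ y x :=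
  h.imp (fun hxy ⟨v, hvy, hvx⟩ => hxy ⟨v, hvx, hvy⟩) fun hxy => abs_sub_comm (x.2 : ℤ) y.2 ▸ hxy

theorem mem_restrict : x ∈ restrict M a b ↔ x ∈ M ∧ a ≤ x.2 ∧ x.2 ≤ b :=
  Finset.mem_filter

theorem isTimeEdge_tgSlice : IsTimeEdge (tgSlice G a b) x ↔ IsTimeEdge G x ∧ a ≤ x.2 ∧ x.2 ≤ b := by
  by_cases h : a ≤ x.2 ∧ x.2 ≤ b <;> simp [IsTimeEdge, tgSlice, h]

namespace IsTemporalMatching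

theorem mono (hM : IsTemporalMatching G Δ M) (h : N ⊆ M) : IsTemporalMatching G Δ N :=
  ⟨fun x hx => hM.1 x (h hx), fun x hx y hy => hM.2 x (h hx) y (h hy)⟩

theorem union [DecidableEq V] (hM : IsTemporalMatching G Δ M) (hN : IsTemporalMatching G Δ N)
    (hMN : ∀ x ∈ M, ∀ y ∈ N, DeltaIndep Δ x y) : IsTemporalMatching G Δ (M ∪ N) := by
  refine ⟨fun x hx => (Finset.mem_union.1 hx).elim (hM.1 x) (hN.1 x), fun x hx y hy hxy => ?_⟩
  rcases Finset.mem_union.1 hx with hx | hx <;> rcases Finset.mem_union.1 hy with hy | hy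
  · exact hM.2 x hx y hy hxy
  · exact hMN x hx y hy
  · exact (hMN y hy x hx).symm
  · exact hN.2 x hx y hy hxy

theorem card_le_of_isDeltaVC (hvc : IsDeltaVC G Δ ν) (hτ : Δ ≤ G.tau)
    (hM : IsTemporalMatching G Δ M) (s : ℕ) (hs : ∀ x ∈ M, s ≤ x.2 ∧ x.2 < s + Δ) :
    M.card ≤ ν := by
  -- The window starting at `s` is moved into the lifetime, which loses no time edge.
  obtain ⟨S, hSν, hS⟩ := hvc (min (max 1 s) (G.tau + 1 - Δ)) (by omega) (by omega)
  have hcover : ∀ x ∈ M, ∃ v ∈ S, v ∈ x.1 := fun x hx =>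
    hS x.2 (by have := (hM.1 x hx).2; have := hs x hx; rw [Finset.mem_Icc]; omega) x.1 (hM.1 x hx).1
  refine (Finset.card_le_card_of_forall_subsingleton (fun x v => v ∈ x.1) hcover ?_).trans hSν
  intro v _ x hx y hy
  by_contra hxy
  refine not_deltaIndep_iff.2 ⟨⟨v, hx.2, hy.2⟩, ?_⟩ (hM.2 x hx.1 y hy.1 hxy)
  have := hs x hx.1
  have := hs y hy.1
  rw [abs_lt]
  omega

end IsTemporalMatching

theorem isTemporalMatching_tgSlice : IsTemporalMatching (tgSlice G a b) Δ M ↔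
    IsTemporalMatching G Δ M ∧ ∀ x ∈ M, a ≤ x.2 ∧ x.2 ≤ b := by
  simp only [IsTemporalMatching, isTimeEdge_tgSlice, forall_and]
  tauto

theorem finite_setOf_isTemporalMatching (G : TemporalGraph V) (Δ : ℕ) :
    {M | IsTemporalMatching G Δ M}.Finite := by
  classical
  let timeEdges := (Finset.range (G.tau + 1)).biUnion fun t => G.E t ×ˢ {t}
  refine timeEdges.powerset.finite_toSet.subset fun M hM => ?_
  refine Finset.mem_powerset.2 fun x hx => Finset.mem_biUnion.2 ⟨x.2, ?_, ?_⟩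
  · exact Finset.mem_range_succ_iff.2 (hM.1 x hx).2.2
  · exact Finset.mem_product.2 ⟨(hM.1 x hx).1, Finset.mem_singleton_self _⟩

theorem card_filter_near_le (hvc : IsDeltaVC G Δ ν) (hτ : Δ ≤ G.tau)
    (hM : IsTemporalMatching G Δ M) (hout : ∀ x ∈ M, ¬ (a ≤ x.2 ∧ x.2 ≤ b)) :
    {x ∈ M | ∃ t ∈ Finset.Icc a b, |((t : ℕ) : ℤ) - x.2| < Δ}.card ≤ 2 * ν := by
  classical
  have hbefore : {x ∈ M | x.2 < a ∧ a < x.2 + Δ}.card ≤ ν := by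
    refine (hM.mono (Finset.filter_subset _ _)).card_le_of_isDeltaVC hvc hτ (a + 1 - Δ) ?_
    intro x hx
    have := (Finset.mem_filter.1 hx).2
    omega
  have hafter : {x ∈ M | b < x.2 ∧ x.2 < b + Δ}.card ≤ ν := by
    refine (hM.mono (Finset.filter_subset _ _)).card_le_of_isDeltaVC hvc hτ (b + 1) ?_
    intro x hx
    have := (Finset.mem_filter.1 hx).2
    omega
  have hsub : {x ∈ M | ∃ t ∈ Finset.Icc a b, |((t : ℕ) : ℤ) - x.2| < Δ} ⊆
      {x ∈ M | x.2 < a ∧ a < x.2 + Δ} ∪ {x ∈ M | b < x.2 ∧ x.2 < b + Δ} := by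
    intro x hx
    obtain ⟨hxM, t, ht, hdist⟩ := Finset.mem_filter.1 hx
    have := hout x hxM
    rw [Finset.mem_Icc] at ht
    rw [abs_lt] at hdist
    simp only [Finset.mem_union, Finset.mem_filter, hxM, true_and]
    omega
  have := (Finset.card_le_card hsub).trans (Finset.card_union_le _ _)
  omega

end Matchings

section Exchange

variable [DecidableEq V] {G : TemporalGraph V} {Δ a b ν : ℕ} {M X O : Finset (Sym2 V × ℕ)}

theorem card_toFinset_le_two (e : Sym2 V) : e.toFinset.card ≤ 2 := by
  rw [Sym2.card_toFinset]
  split_ifs <;> omega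

/-- The pairs (vertex, time) at which a vertex is matched by a time edge of `X`. -/
def occupied (X : Finset (Sym2 V × ℕ)) : Finset (V × ℕ) :=
  X.biUnion fun x => x.1.toFinset ×ˢ {x.2}

/-- The pairs (vertex, time) with time in `[a, b]` at which the vertex cannot be matched because of
a time edge of `O` at distance less than `Δ`. -/
def blocked (Δ a b : ℕ) (O : Finset (Sym2 V × ℕ)) : Finset (V × ℕ) :=
  O.biUnion fun x => x.1.toFinset ×ˢ {t ∈ Finset.Icc a b | |((t : ℕ) : ℤ) - x.2| < Δ}

theorem mem_occupied {z : V × ℕ} : z ∈ occupied X ↔ ∃ x ∈ X, z.1 ∈ x.1 ∧ z.2 = x.2 := by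
  simp only [occupied, Finset.mem_biUnion, Finset.mem_product, Sym2.mem_toFinset,
    Finset.mem_singleton]

theorem mem_blocked {z : V × ℕ} : z ∈ blocked Δ a b O ↔
    ∃ x ∈ O, z.1 ∈ x.1 ∧ (a ≤ z.2 ∧ z.2 ≤ b) ∧ |(z.2 : ℤ) - x.2| < Δ := by
  simp [blocked]

theorem disjoint_occupied_blocked_iff (hX : ∀ x ∈ X, a ≤ x.2 ∧ x.2 ≤ b) :
    Disjoint (occupied X) (blocked Δ a b O) ↔ ∀ x ∈ X, ∀ y ∈ O, DeltaIndep Δ x y := by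
  rw [Finset.disjoint_left]
  constructor
  · intro hdisj x hx y hy
    by_contra hxy
    obtain ⟨⟨v, hvx, hvy⟩, hdist⟩ := not_deltaIndep_iff.1 hxy
    exact hdisj (a := (v, x.2)) (mem_occupied.2 ⟨x, hx, hvx, rfl⟩)
      (mem_blocked.2 ⟨y, hy, hvy, hX x hx, hdist⟩)
  · rintro hindep ⟨v, t⟩ hocc hblock
    obtain ⟨x, hx, hvx, rfl⟩ := mem_occupied.1 hocc
    obtain ⟨y, hy, hvy, -, hdist⟩ := mem_blocked.1 hblock
    exact not_deltaIndep_iff.2 ⟨⟨v, hvx, hvy⟩, hdist⟩ (hindep x hx y hy)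

theorem card_occupied_le (X : Finset (Sym2 V × ℕ)) : (occupied X).card ≤ 2 * X.card := by
  rw [mul_comm]
  refine Finset.card_biUnion_le_card_mul _ _ _ fun x _ => ?_
  rw [Finset.card_product, Finset.card_singleton, mul_one]
  exact card_toFinset_le_two x.1

theorem card_blocked_le (hvc : IsDeltaVC G Δ ν) (hτ : Δ ≤ G.tau) (hab : b < a + Δ)
    (hO : IsTemporalMatching G Δ O) (hout : ∀ x ∈ O, ¬ (a ≤ x.2 ∧ x.2 ≤ b)) :
    (blocked Δ a b O).card ≤ 4 * ν * Δ := by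
  let near := {x ∈ O | ∃ t ∈ Finset.Icc a b, |((t : ℕ) : ℤ) - x.2| < Δ}
  have hsub : blocked Δ a b O ⊆ near.biUnion fun x => x.1.toFinset ×ˢ Finset.Icc a b := by
    intro z hz
    obtain ⟨x, hx, hzx, hzt, hdist⟩ := mem_blocked.1 hz
    have hzt := Finset.mem_Icc.2 hzt
    exact Finset.mem_biUnion.2 ⟨x, Finset.mem_filter.2 ⟨hx, z.2, hzt, hdist⟩,
      Finset.mem_product.2 ⟨Sym2.mem_toFinset.2 hzx, hzt⟩⟩
  calc (blocked Δ a b O).card ≤ near.card * (2 * Δ) := by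
        refine (Finset.card_le_card hsub).trans (Finset.card_biUnion_le_card_mul _ _ _ ?_)
        intro x _
        rw [Finset.card_product, Nat.card_Icc]
        exact Nat.mul_le_mul (card_toFinset_le_two x.1) (by omega)
    _ ≤ 2 * ν * (2 * Δ) := Nat.mul_le_mul_right _ (card_filter_near_le hvc hτ hO hout)
    _ = 4 * ν * Δ := by ring

/-- The analogue of `DComplete` for an arbitrary window `[a, b]`; `DComplete G Δ d` is the case
`a = Δ * (d - 1) + 1`, `b = Δ * d`. -/
def IsCompleteOn (G : TemporalGraph V) (Δ a b : ℕ) (ℳ : Finset (Finset (Sym2 V × ℕ))) : Prop :=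
  ∀ M : Finset (Sym2 V × ℕ), IsTemporalMatching G Δ M →
    ∃ M' ∈ ℳ, IsTemporalMatching G Δ ((M \ restrict M a b) ∪ M') ∧
      M.card ≤ ((M \ restrict M a b) ∪ M').card

theorem isCompleteOn_of_isMaxRepresentative (hvc : IsDeltaVC G Δ ν) (hτ : Δ ≤ G.tau)
    (hab : b < a + Δ) {F F' : Finset (Finset (Sym2 V × ℕ))}
    (hF : ∀ X, X ∈ F ↔ IsTemporalMatching (tgSlice G a b) Δ X) (hF'F : F' ⊆ F)
    (hrep : IsMaxRepresentative (4 * ν * Δ) occupied Finset.card F' F) :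
    IsCompleteOn G Δ a b F' := by
  intro M hM
  set N := restrict M a b
  have hNM : N ⊆ M := Finset.filter_subset _ _
  have hN : ∀ x ∈ N, a ≤ x.2 ∧ x.2 ≤ b := fun x hx => (mem_restrict.1 hx).2
  have hout : ∀ x ∈ M \ N, ¬ (a ≤ x.2 ∧ x.2 ≤ b) := fun x hx hxab =>
    (Finset.mem_sdiff.1 hx).2 (mem_restrict.2 ⟨(Finset.mem_sdiff.1 hx).1, hxab⟩)
  have hO : IsTemporalMatching G Δ (M \ N) := hM.mono Finset.sdiff_subset
  have hNO : ∀ x ∈ N, ∀ y ∈ M \ N, DeltaIndep Δ x y := fun x hx y hy =>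
    hM.2 x (hNM hx) y (Finset.sdiff_subset hy) fun hxy => hout y hy (hxy ▸ hN x hx)
  obtain ⟨X, hXF', hcard, hXO⟩ := hrep (blocked Δ a b (M \ N))
    (card_blocked_le hvc hτ hab hO hout) N
    ((hF N).2 (isTemporalMatching_tgSlice.2 ⟨hM.mono hNM, hN⟩))
    ((disjoint_occupied_blocked_iff hN).2 hNO)
  obtain ⟨hX, hXab⟩ := isTemporalMatching_tgSlice.1 ((hF X).1 (hF'F hXF'))
  have hXO := (disjoint_occupied_blocked_iff hXab).1 hXO
  refine ⟨X, hXF', hO.union hX fun x hx y hy => (hXO y hy x hx).symm, ?_⟩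
  have hdisj : Disjoint (M \ N) X := Finset.disjoint_left.2 fun x hxO hxX => hout x hxO (hXab x hxX)
  calc M.card = (M \ N).card + N.card := (Finset.card_sdiff_add_card_eq_card hNM).symm
    _ ≤ (M \ N).card + X.card := Nat.add_le_add_left hcard _
    _ = ((M \ N) ∪ X).card := (Finset.card_union_of_disjoint hdisj).symm

theorem statement8_general (hΔ : 2 ≤ Δ) (hτ : Δ ≤ G.tau) (hab : b < a + Δ)
    (hvc : IsDeltaVC G Δ ν) :
    ∃ ℳ : Finset (Finset (Sym2 V × ℕ)),
      (∀ M ∈ ℳ, IsTemporalMatching (tgSlice G a b) Δ M) ∧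
      IsCompleteOn G Δ a b ℳ ∧ ℳ.card ≤ Δ ^ (8 * ν) := by
  let F := (finite_setOf_isTemporalMatching (tgSlice G a b) Δ).toFinset
  have hF : ∀ X, X ∈ F ↔ IsTemporalMatching (tgSlice G a b) Δ X := fun X =>
    Set.Finite.mem_toFinset _
  have hoccupied : ∀ X ∈ F, (occupied X).card ≤ 2 * ν := by
    intro X hX
    obtain ⟨hX, hXab⟩ := isTemporalMatching_tgSlice.1 ((hF X).1 hX)
    have hXν := hX.card_le_of_isDeltaVC hvc hτ a fun x hx =>
      ⟨(hXab x hx).1, (hXab x hx).2.trans_lt hab⟩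
    exact (card_occupied_le X).trans (Nat.mul_le_mul_left 2 hXν)
  have hΔ2 : (2 : ℝ) ≤ Δ := by exact_mod_cast hΔ
  have hx1 : (1 : ℝ) / (2 * Δ) ≤ 1 := (div_le_one (by positivity)).2 (by linarith)
  obtain ⟨F', hF'F, hrep, hcard⟩ := exists_isMaxRepresentative (R := ℝ) (x := 1 / (2 * Δ))
    (by positivity) (sub_nonneg.2 hx1) (add_sub_cancel _ _) (4 * ν * Δ) Finset.card hoccupied
  refine ⟨F', fun X hX => (hF X).1 (hF'F hX),
    isCompleteOn_of_isMaxRepresentative hvc hτ hab hF hF'F hrep, ?_⟩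
  have hpos : (0 : ℝ) < Δ ^ (8 * ν) := by positivity
  have hcard : (F'.card : ℝ) * ((Δ : ℝ) ^ (8 * ν))⁻¹ ≤ 1 :=
    (mul_le_mul_of_nonneg_left (inv_pow_le_pow_mul_one_sub_pow hΔ ν) (by positivity)).trans hcard
  rw [mul_inv_le_iff₀ hpos, one_mul] at hcard
  exact_mod_cast hcard

end Exchange

/-- There is a constant `c > 0` such that for every `Δ ≥ 2`,
`d ≥ 1`, and temporal graph `G` of lifetime at least `dΔ` with `Δ`-vertex cover
number `ν`, there is a family `ℳ` of `Δ`-temporal matchings of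
`G[Δ(d-1)+1, Δd]` which is `d`-complete for `G` and has size at most `Δ^(c·ν)`. -/
theorem statement8 :
    ∃ c : ℕ, 0 < c ∧
      ∀ (V : Type) [Fintype V] [DecidableEq V] (G : TemporalGraph V) (Δ d ν : ℕ),
        2 ≤ Δ → 1 ≤ d → d * Δ ≤ G.tau → IsDeltaVCNum G Δ ν →
        ∃ ℳ : Finset (Finset (Sym2 V × ℕ)),
          (∀ M ∈ ℳ, IsTemporalMatching (tgSlice G (Δ * (d - 1) + 1) (Δ * d)) Δ M) ∧
          DComplete G Δ d ℳ ∧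
          ℳ.card ≤ Δ ^ (c * ν) := by
  refine ⟨8, by norm_num, fun V _ _ G Δ d ν hΔ hd hτ hν => ?_⟩
  have hwindow : Δ * d = Δ * (d - 1) + Δ := by
    rw [← Nat.mul_succ, Nat.succ_eq_add_one, Nat.sub_add_cancel hd]
  exact statement8_general hΔ ((Nat.le_mul_of_pos_left Δ hd).trans hτ) (by omega) hν.1
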